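/- arXiv:1605.06051 — 2 statements merged into one kernel-verified Lean document; each statement's English description precedes it below -/
import Mathlib

section
/- Assume every 𝚫¹₂ subset of ℝ × ℝ has the Baire property. Then for every nonmeager Borel set B ⊆ ℝ and every equivalence relation E on B which is a 𝚫¹₂ subset of ℝ × ℝ and all of whose equivalence classes are meager, there is a perfect set P ⊆ B of pairwise E-inequivalent elements. -/
/-!
The only use of definability is that `E` has the Baire property. All vertical sections of `E` are
meager, so by the Kuratowski–Ulam theorem `E` is itself meager in `ℝ × ℝ`
(`isMeagre_of_sections`). The Borel set `B` is comeager in some nonempty open set `U`.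

By Mycielski's theorem (`exists_map_pairs_mem`), for every comeager `R ⊆ ℝ × ℝ` some continuous
`f : (ℕ → Bool) → U` sends every pair of distinct points into `R`. The proof is a Baire category
argument in the space `C(ℕ → Bool, ℝ)`: for `W` open dense and each coordinate `k`, the maps `f`
with `(f x, f y) ∈ W` whenever `x k ≠ y k` form an open dense set. Openness is compactness of
`{(x, y) | x k ≠ y k}`; for density, functions of finitely many coordinates are dense, and the
finitely many values of such a function can be perturbed to satisfy the condition.

Apply this to `R = {(x, y) ∉ E | x ∈ U → x ∈ B}`. The range of `f` then lies in `B` and consists of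
inequivalent points, and reflexivity of `E` on `B` makes `f` injective, so the range is perfect.
-/

open MeasureTheory Set

/-- A set is 𝚺¹₂ if it is the projection of a coanalytic subset of `X × ℕ^ℕ`. -/
def Sigma12 {X : Type*} [TopologicalSpace X] (A : Set X) : Prop :=
  ∃ C : Set (X × (ℕ → ℕ)), AnalyticSet Cᶜ ∧ A = Prod.fst '' C

/-- A set is 𝚫¹₂ if both it and its complement are 𝚺¹₂. -/
def Delta12 {X : Type*} [TopologicalSpace X] (A : Set X) : Prop :=
  Sigma12 A ∧ Sigma12 Aᶜ

/-- A set has the Baire property if it differs from an open set by a meager set. -/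
def HasBaireProp {Y : Type*} [TopologicalSpace Y] (s : Set Y) : Prop :=
  ∃ U : Set Y, IsOpen U ∧ IsMeagre (symmDiff s U)

/-- `E` is an equivalence relation on the set `B`, viewed as a set of pairs. -/
def IsEquivOn {X : Type*} (B : Set X) (E : Set (X × X)) : Prop :=
  E ⊆ B ×ˢ B ∧ (∀ x ∈ B, (x, x) ∈ E) ∧ (∀ x y, (x, y) ∈ E → (y, x) ∈ E) ∧
    ∀ x y z, (x, y) ∈ E → (y, z) ∈ E → (x, z) ∈ E

open Filter Topology

/-- Half of Kuratowski–Ulam for an open dense set: comeagerly many vertical sections are dense. -/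
lemma residual_dense_section {W : Set (ℝ × ℝ)} (ho : IsOpen W) (hd : Dense W) :
    ∀ᶠ x in residual ℝ, Dense {y | (x, y) ∈ W} := by
  have key : ∀ V ∈ TopologicalSpace.countableBasis ℝ,
      ∀ᶠ x in residual ℝ, ∃ y ∈ V, (x, y) ∈ W := by
    intro V hV
    have hVo := TopologicalSpace.isOpen_of_mem_countableBasis hV
    have hVn := TopologicalSpace.nonempty_of_mem_countableBasis hV
    have h1 : IsOpen (Prod.fst '' (W ∩ univ ×ˢ V)) :=
      isOpenMap_fst _ (ho.inter (isOpen_univ.prod hVo))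
    have h2 : Dense (Prod.fst '' (W ∩ univ ×ˢ V)) := by
      rw [dense_iff_inter_open]
      intro O hO hOn
      obtain ⟨⟨a, b⟩, ⟨ha, hb⟩, hw⟩ :=
        hd.inter_open_nonempty (O ×ˢ V) (hO.prod hVo) (hOn.prod hVn)
      exact ⟨a, ha, (a, b), ⟨hw, mem_univ _, hb⟩, rfl⟩
    filter_upwards [residual_of_dense_open h1 h2] with x hx
    obtain ⟨⟨a, b⟩, ⟨hw, -, hb⟩, rfl⟩ := hx
    exact ⟨b, hb, hw⟩
  have key2 := (eventually_countable_ball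
    (TopologicalSpace.countable_countableBasis ℝ)).2 key
  filter_upwards [key2] with x hx
  rw [(TopologicalSpace.isBasis_countableBasis ℝ).dense_iff]
  intro V hV _
  obtain ⟨y, hy, hw⟩ := hx V hV
  exact ⟨y, hy, hw⟩

/-- Kuratowski–Ulam: comeagerly many vertical sections of a meager set are meager. -/
lemma residual_isMeagre_section {M : Set (ℝ × ℝ)} (hM : IsMeagre M) :
    ∀ᶠ x in residual ℝ, IsMeagre {y | (x, y) ∈ M} := by
  obtain ⟨S, ho, hd, hc, hS⟩ := mem_residual_iff.1 hM
  have := (eventually_countable_ball hc).2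
    fun W hW => residual_dense_section (ho W hW) (hd W hW)
  filter_upwards [this] with x hx
  have h : ∀ᶠ y in residual ℝ, ∀ W ∈ S, (x, y) ∈ W :=
    (eventually_countable_ball hc).2 fun W hW => residual_of_dense_open
      ((ho W hW).preimage (by fun_prop : Continuous fun y : ℝ => (x, y))) (hx W hW)
  filter_upwards [h] with y hy
  exact hS hy

/-- Converse Kuratowski–Ulam: a set with the Baire property, all of whose vertical sections are
meager, is meager. -/
lemma isMeagre_of_sections {E : Set (ℝ × ℝ)} (hE : HasBaireProp E)
    (hs : ∀ x, IsMeagre {y | (x, y) ∈ E}) : IsMeagre E := by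
  obtain ⟨U, hU, hM⟩ := hE
  suffices h : U = ∅ by
    subst h
    simpa [symmDiff_def] using hM
  by_contra hne
  obtain ⟨⟨a, b⟩, hab⟩ := Set.nonempty_iff_ne_empty.2 hne
  obtain ⟨u, v, hu, hv, ha, hb, huv⟩ := isOpen_prod_iff.1 hU a b hab
  obtain ⟨x, hx, hxM⟩ := (dense_of_mem_residual (residual_isMeagre_section hM)).inter_open_nonempty
    u hu ⟨a, ha⟩
  refine not_isMeagre_of_isOpen hv ⟨b, hb⟩ (((hs x).union hxM).mono ?_)
  intro y hy
  by_cases h : (x, y) ∈ E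
  · exact Or.inl h
  · exact Or.inr (Or.inr ⟨huv ⟨hx, hy⟩, h⟩)

/-- The truncation of a point of the Cantor space to its first `m` coordinates. -/
def truncMap (m : ℕ) (s : Fin m → Bool) : ℕ → Bool :=
  fun i => if h : i < m then s ⟨i, h⟩ else false

/-- Functions depending on finitely many coordinates are dense in `C(ℕ → Bool, ℝ)`: any `f` is the
uniform limit of its compositions with truncations. -/
lemma tendsto_trunc (f : C(ℕ → Bool, ℝ)) :
    Tendsto (fun m => (⟨fun x => f (truncMap m fun i => x i),
      f.continuous.comp ((continuous_of_discreteTopology (f := truncMap m)).comp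
        (by fun_prop))⟩ : C(ℕ → Bool, ℝ)))
      atTop (𝓝 f) := by
  rw [ContinuousMap.tendsto_iff_tendstoUniformly]
  have hr : TendstoUniformly (fun (m : ℕ) (x : ℕ → Bool) => truncMap m fun i => x i) id atTop := by
    rw [tendstoUniformly_iff_tendsto, Pi.uniformity, tendsto_iInf]
    intro i
    rw [tendsto_comap_iff]
    intro s hs
    rw [mem_map]
    filter_upwards [(eventually_gt_atTop i).prod_inl ⊤] with p hp
    have : truncMap p.1 (fun i => p.2 i) i = p.2 i := by simp [truncMap, hp]
    simp only [mem_preimage, Function.comp, this]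
    exact refl_mem_uniformity hs
  exact (CompactSpace.uniformContinuous_of_continuous f.continuous).comp_tendstoUniformly hr

/-- Vectors of reals whose pairs of distinct coordinates lie in a given open dense set of the plane
are dense. -/
lemma dense_pairs {W : Set (ℝ × ℝ)} (ho : IsOpen W) (hd : Dense W) (ι : Type) [Finite ι] :
    Dense {v : ι → ℝ | ∀ s t, s ≠ t → (v s, v t) ∈ W} := by
  classical
  have : {v : ι → ℝ | ∀ s t, s ≠ t → (v s, v t) ∈ W} =
      ⋂ p : {p : ι × ι // p.1 ≠ p.2}, {v : ι → ℝ | (v p.1.1, v p.1.2) ∈ W} := by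
    ext v; simp
  rw [this]
  refine dense_iInter_of_isOpen (fun p => ho.preimage (by fun_prop)) ?_
  rintro ⟨⟨s, t⟩, hst⟩
  let L : (ι → ℝ) →ₗ[ℝ] ℝ × ℝ := (LinearMap.proj s).prod (LinearMap.proj t)
  have hL : Function.Surjective L := by
    rintro ⟨a, b⟩
    refine ⟨fun i => if i = s then a else b, ?_⟩
    have hts : t ≠ s := fun h => hst h.symm
    simp [L, hts]
  exact hd.preimage (L.isOpenMap_of_finiteDimensional hL)

/-- The category step of Mycielski's theorem for one open dense set and one coordinate: the
condition is open by compactness of `{(x, y) | x k ≠ y k}`, and dense by `tendsto_trunc` and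
`dense_pairs`. -/
lemma residual_pairs_coord {W : Set (ℝ × ℝ)} (ho : IsOpen W) (hd : Dense W) (k : ℕ) :
    {f : C(ℕ → Bool, ℝ) | ∀ x y, x k ≠ y k → (f x, f y) ∈ W} ∈ residual C(ℕ → Bool, ℝ) := by
  refine residual_of_dense_open ?_ ?_
  · have hK : IsCompact {p : (ℕ → Bool) × (ℕ → Bool) | p.1 k ≠ p.2 k} := by
      refine IsClosed.isCompact ?_
      have : Continuous fun p : (ℕ → Bool) × (ℕ → Bool) => (p.1 k, p.2 k) := by fun_prop
      exact (isClosed_discrete {q : Bool × Bool | q.1 ≠ q.2}).preimage this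
    have hc : Continuous fun f : C(ℕ → Bool, ℝ) => f.prodMap f := by
      refine ContinuousMap.continuous_of_continuous_uncurry _ ?_
      change Continuous fun q : C(ℕ → Bool, ℝ) × ((ℕ → Bool) × (ℕ → Bool)) =>
        (q.1 q.2.1, q.1 q.2.2)
      fun_prop
    convert (ContinuousMap.isOpen_setOfPred_mapsTo hK ho).preimage hc using 1
    ext f
    constructor
    · rintro h ⟨x, y⟩ hp
      exact h x y hp
    · intro h x y hp
      exact h (show (x, y) ∈ {p : (ℕ → Bool) × (ℕ → Bool) | p.1 k ≠ p.2 k} from hp)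
  · rw [dense_iff_inter_open]
    rintro N hN ⟨f, hf⟩
    obtain ⟨m, hm, hkm⟩ := (((tendsto_trunc f).eventually (hN.mem_nhds hf)).and
      (eventually_gt_atTop k)).exists
    -- The step functions of the first `m` coordinates, parametrized by their values.
    let Φ : ((Fin m → Bool) → ℝ) → C(ℕ → Bool, ℝ) := fun v =>
      ⟨fun x => v fun i => x i, continuous_of_discreteTopology.comp (by fun_prop)⟩
    have hΦ : Continuous Φ := by
      refine ContinuousMap.continuous_of_continuous_uncurry _ ?_
      change Continuous fun q : ((Fin m → Bool) → ℝ) × (ℕ → Bool) => q.1 fun i : Fin m => q.2 i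
      have h1 : Continuous fun q : ((Fin m → Bool) → ℝ) × (Fin m → Bool) => q.1 q.2 := by
        rw [continuous_prod_of_discrete_right]
        intro s
        fun_prop
      exact h1.comp (g := fun q : ((Fin m → Bool) → ℝ) × (Fin m → Bool) => q.1 q.2)
        (f := fun q : ((Fin m → Bool) → ℝ) × (ℕ → Bool) => (q.1, fun i : Fin m => q.2 i))
        (by fun_prop)
    obtain ⟨v, hvN, hv⟩ := (dense_pairs ho hd (Fin m → Bool)).inter_open_nonempty (Φ ⁻¹' N)
      (hN.preimage hΦ) ⟨fun s => f (truncMap m s), hm⟩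
    exact ⟨Φ v, hvN, fun x y hxy => hv _ _ fun h => hxy (congrFun h ⟨k, hkm⟩)⟩

/-- Mycielski's theorem in the plane, localized to an open set `U`. -/
lemma exists_map_pairs_mem {R : Set (ℝ × ℝ)} (hR : R ∈ residual (ℝ × ℝ)) {U : Set ℝ}
    (hU : IsOpen U) (hne : U.Nonempty) :
    ∃ f : C(ℕ → Bool, ℝ), (∀ x, f x ∈ U) ∧ ∀ x y, x ≠ y → (f x, f y) ∈ R := by
  obtain ⟨S, ho, hd, hc, hS⟩ := mem_residual_iff.1 hR
  have h : ∀ᶠ f : C(ℕ → Bool, ℝ) in residual _, ∀ W ∈ S, ∀ k x y, x k ≠ y k → (f x, f y) ∈ W :=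
    (eventually_countable_ball hc).2 fun W hW => eventually_countable_forall.2 fun k =>
      residual_pairs_coord (ho W hW) (hd W hW) k
  obtain ⟨c, hcU⟩ := hne
  obtain ⟨f, hfU, hf⟩ := (dense_of_mem_residual h).inter_open_nonempty
    {f : C(ℕ → Bool, ℝ) | MapsTo f univ U}
    (ContinuousMap.isOpen_setOfPred_mapsTo isCompact_univ hU)
    ⟨ContinuousMap.const _ c, fun _ _ => hcU⟩
  refine ⟨f, fun x => hfU (mem_univ x), fun x y hxy => hS fun W hW => ?_⟩
  obtain ⟨k, hk⟩ := Function.ne_iff.1 hxy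
  exact hf W hW k x y hk

lemma perfect_range {f : (ℕ → Bool) → ℝ} (hf : Continuous f) (hi : Function.Injective f) :
    Perfect (range f) := by
  refine ⟨(isCompact_range hf).isClosed, preperfect_iff_nhds.2 ?_⟩
  rintro _ ⟨x, rfl⟩ N hN
  -- Flipping the `n`-th coordinate of `x` gives points distinct from `x` and converging to `x`.
  have ht : Tendsto (fun n => Function.update x n (!x n)) atTop (𝓝 x) := by
    rw [tendsto_pi_nhds]
    intro i
    refine tendsto_const_nhds.congr' ?_
    filter_upwards [eventually_gt_atTop i] with n hn
    rw [Function.update_of_ne hn.ne]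
  obtain ⟨n, hn⟩ := ((hf.tendsto x).comp ht |>.eventually hN).exists
  refine ⟨_, ⟨hn, mem_range_self _⟩, fun h => ?_⟩
  have := congrFun (hi h) n
  simp at this

theorem psp_meager_delta12
    (hbp : ∀ A : Set (ℝ × ℝ), Delta12 A → HasBaireProp A) :
    ∀ B : Set ℝ, MeasurableSet B → ¬ IsMeagre B →
      ∀ E : Set (ℝ × ℝ), IsEquivOn B E → Delta12 E →
        (∀ x ∈ B, IsMeagre {y | (x, y) ∈ E}) →
        ∃ P : Set ℝ, P ⊆ B ∧ Perfect P ∧ P.Nonempty ∧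
          ∀ x ∈ P, ∀ y ∈ P, x ≠ y → (x, y) ∉ E := by
  intro B hB hBm E hE hΔ hcl
  have hEm : IsMeagre E := by
    refine isMeagre_of_sections (hbp E hΔ) fun x => ?_
    by_cases hx : x ∈ B
    · exact hcl x hx
    · convert IsMeagre.empty (X := ℝ)
      ext y
      simpa using fun h => hx (hE.1 h).1
  obtain ⟨U, hU, hBU⟩ := hB.residualEq_isOpen
  rw [Filter.eventuallyEq_set] at hBU
  have hne : U.Nonempty := by
    rw [Set.nonempty_iff_ne_empty]
    rintro rfl
    refine hBm ?_
    filter_upwards [hBU] with x hx h using hx.1 h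
  have hR : {p : ℝ × ℝ | p ∉ E ∧ (p.1 ∈ U → p.1 ∈ B)} ∈ residual (ℝ × ℝ) := by
    filter_upwards [hEm, (tendsto_residual_of_isOpenMap continuous_fst
      isOpenMap_fst).eventually hBU] with p hp hq
    exact ⟨hp, hq.2⟩
  obtain ⟨f, hfU, hf⟩ := exists_map_pairs_mem hR hU hne
  have hfB : ∀ x, f x ∈ B := fun x =>
    (hf x (fun i => !x i) fun h => by simpa using congrFun h 0).2 (hfU x)
  have hi : Function.Injective f := by
    intro x y hxy
    by_contra hne
    have := (hf x y hne).1
    rw [← hxy] at this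
    exact this (hE.2.1 _ (hfB x))
  refine ⟨range f, range_subset_iff.2 hfB, perfect_range f.continuous hi, range_nonempty f, ?_⟩
  rintro _ ⟨x, rfl⟩ _ ⟨y, rfl⟩ hxy
  exact (hf x y fun h => hxy (congrArg f h)).1
end

section
/- Assume every 𝚺¹₂ subset of ℝ × ℝ is Lebesgue measurable. Then for every Borel set B ⊆ ℝ of positive Lebesgue measure and every equivalence relation E on B which is a 𝚺¹₂ subset of ℝ × ℝ and all of whose equivalence classes are Lebesgue null, there is a perfect set P ⊆ B of pairwise E-inequivalent elements. -/
/-!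
By the measurability hypothesis `E` is null-measurable, and since its sections are null, Fubini
makes `E` a Lebesgue null subset of the plane. What remains is the measure-theoretic form of
Mycielski's theorem on independent sets: a null set `E` of the plane avoids all pairs of distinct
points of some perfect subset of any given Borel set of positive measure. Of the equivalence
relation only `E ⊆ B ×ˢ B` matters.

Let `m` be Lebesgue measure restricted to a compact subset of `B` of positive measure, and add the
diagonal, which is `m × m`-null, to `E`. Choose closed sets `C k` disjoint from `E` whose union is
conull. A Cantor scheme of points `x σ`, for `σ` a finite binary word, is built level by level,
together with labels `k σ τ` such that `(x σ, x τ)` is a density point of `C (k σ τ)`; the label of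
a pair is inherited by all pairs of extensions. The step from one level to the next
(`splitting_step`) is probabilistic: the new points are drawn independently from `m` conditioned on
a small ball around the old ones. By density each of the finitely many inherited requirements fails
with small probability, and two points drawn from the same ball almost surely form a density point
of some `C k`. Along two distinct branches the pairs eventually stay in one closed set `C k`, hence
so does the limit pair, which is therefore not in `E` (`exists_cantor_avoiding`).
-/


open MeasureTheory Set

open Filter Topology Metric ProbabilityTheory

/-- `p` lies in `C` and is a density point of `C` for the measure `m × m`: the conditional
probability of `C` given the ball of radius `r` around `p` tends to `1` as `r → 0`. -/
def DensePt (m : Measure ℝ) (C : Set (ℝ × ℝ)) (p : ℝ × ℝ) : Prop :=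
  p ∈ C ∧ Tendsto (fun r => (m.prod m)[C | closedBall p r]) (𝓝[>] 0) (𝓝 1)

lemma ae_densePt (m : Measure ℝ) [IsFiniteMeasure m] {C : Set (ℝ × ℝ)} (hC : MeasurableSet C) :
    ∀ᵐ p ∂(m.prod m), p ∈ C → DensePt m C p := by
  have h := Besicovitch.ae_tendsto_measure_inter_div (m.prod m) C
  rw [ae_restrict_iff' hC] at h
  filter_upwards [h] with p hp hpC
  refine ⟨hpC, (hp hpC).congr fun r => ?_⟩
  rw [cond_apply measurableSet_closedBall, inter_comm, ENNReal.div_eq_inv_mul]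

/-- With the sup metric a ball of `ℝ × ℝ` is a square, so conditioning on it yields a product. -/
lemma cond_prod_cond (m : Measure ℝ) [IsFiniteMeasure m] (a b r : ℝ)
    (ha : m (closedBall a r) ≠ 0) :
    (m[|closedBall a r]).prod (m[|closedBall b r]) = (m.prod m)[|closedBall (a, b) r] := by
  rw [← closedBall_prod_same]
  simp only [ProbabilityTheory.cond, Measure.prod_smul_left, Measure.prod_smul_right,
    Measure.prod_restrict, smul_smul, Measure.prod_prod]
  rw [ENNReal.mul_inv (Or.inl ha) (Or.inl (measure_ne_top _ _)), mul_comm]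

lemma map_pi_pair {κ : Type*} [Fintype κ] (ν : κ → Measure ℝ) [∀ i, IsProbabilityMeasure (ν i)]
    {p q : κ} (hpq : p ≠ q) :
    (Measure.pi ν).map (fun y => (y p, y q)) = (ν p).prod (ν q) := by
  have h := (iIndepFun_pi (μ := ν) (X := fun _ x => x) (fun _ => aemeasurable_id)).indepFun hpq
  rw [indepFun_iff_map_prod_eq_prod_map_map (measurable_pi_apply p).aemeasurable
    (measurable_pi_apply q).aemeasurable] at h
  rw [h]
  congr 1
  · exact (measurePreserving_eval ν p).map_eq
  · exact (measurePreserving_eval ν q).map_eq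

/-- The splitting step. Given finitely many points of the support of `m`, pairwise forming density
points of prescribed sets among the `C n`, each point `x i` can be replaced by the family of the
points `y q`, `π q = i`, close to it. Pairs over distinct `i`, `j` keep the set prescribed to
`(i, j)`; pairs over the same `i` are given a set. The `y q` are obtained by independent sampling
from `m` conditioned on a small ball around `x (π q)`. -/
lemma splitting_step {m : Measure ℝ} [IsFiniteMeasure m] {C : ℕ → Set (ℝ × ℝ)}
    (hC : ∀ n, MeasurableSet (C n)) (hae : ∀ᵐ p ∂(m.prod m), ∃ n, p ∈ C n)
    {ι κ : Type*} [Finite ι] [Fintype κ] (π : κ → ι) (x : ι → ℝ) (k : ι → ι → ℕ)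
    (hx : ∀ i, x i ∈ m.support) (hk : ∀ i j, i ≠ j → DensePt m (C (k i j)) (x i, x j))
    {ε : ℝ} (hε : 0 < ε) :
    ∃ (y : κ → ℝ) (k' : κ → κ → ℕ), (∀ q, y q ∈ m.support) ∧
      (∀ p q, p ≠ q → DensePt m (C (k' p q)) (y p, y q)) ∧
      (∀ p q, π p ≠ π q → k' p q = k (π p) (π q)) ∧ ∀ q, dist (x (π q)) (y q) ≤ ε := by
  classical
  -- `δ` is chosen so small that a union bound over all pairs of indices stays below `1`.
  set N : ℕ := Fintype.card (κ × κ) with hN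
  set δ : ENNReal := ((N : ENNReal) + 1)⁻¹ with hδ
  have hδ0 : 0 < δ := by
    rw [hδ, ENNReal.inv_pos]; exact ENNReal.add_ne_top.2 ⟨ENNReal.natCast_ne_top _, by simp⟩
  have hNδ : (N : ENNReal) * δ < 1 := by
    rw [hδ, ← div_eq_mul_inv]
    refine ENNReal.div_lt_of_lt_mul ?_
    rw [one_mul]
    exact_mod_cast Nat.lt_succ_self N
  have hpos : ∀ i, ∀ r > 0, m (closedBall (x i) r) ≠ 0 := fun i r hr =>
    ((Measure.mem_support_iff_forall _).1 (hx i) _ (closedBall_mem_nhds _ hr)).ne'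
  -- A radius at which every prescribed set fails with probability less than `δ`.
  obtain ⟨r, hr0, hrε, hrδ⟩ : ∃ r : ℝ, 0 < r ∧ r ≤ ε ∧ ∀ i j, i ≠ j →
      (m.prod m)[(C (k i j))ᶜ | closedBall (x i, x j) r] < δ := by
    have h1 : ∀ᶠ r : ℝ in 𝓝[>] 0, 0 < r := self_mem_nhdsWithin
    have h2 : ∀ᶠ r : ℝ in 𝓝[>] 0, r ≤ ε := by
      filter_upwards [Ioc_mem_nhdsGT hε] with r hr using hr.2
    have h3 : ∀ᶠ r : ℝ in 𝓝[>] 0, ∀ i j, i ≠ j →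
        (m.prod m)[(C (k i j))ᶜ | closedBall (x i, x j) r] < δ := by
      rw [eventually_all]; intro i
      rw [eventually_all]; intro j
      by_cases hij : i = j
      · exact Eventually.of_forall fun r h => absurd hij h
      have ht : Tendsto (fun r => 1 - (m.prod m)[C (k i j) | closedBall (x i, x j) r])
          (𝓝[>] 0) (𝓝 (1 - 1)) :=
        ENNReal.Tendsto.sub tendsto_const_nhds (hk i j hij).2 (Or.inl (by simp))
      rw [tsub_self] at ht
      filter_upwards [ht.eventually (gt_mem_nhds hδ0), h1] with r hr hr0 _
      have : IsProbabilityMeasure (m.prod m)[|closedBall (x i, x j) r] := by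
        apply cond_isProbabilityMeasure
        rw [← closedBall_prod_same, Measure.prod_prod]
        exact mul_ne_zero (hpos i r hr0) (hpos j r hr0)
      rwa [prob_compl_eq_one_sub (hC _)]
    obtain ⟨r, a, b, c⟩ := (h1.and (h2.and h3)).exists
    exact ⟨r, a, b, c⟩
  let ν : κ → Measure ℝ := fun q => m[|closedBall (x (π q)) r]
  have hν : ∀ q, IsProbabilityMeasure (ν q) := fun q =>
    cond_isProbabilityMeasure (hpos _ r hr0)
  -- Conditions of probability one.
  have hD : ∀ᵐ p ∂(m.prod m), ∀ n, p ∈ C n → DensePt m (C n) p :=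
    ae_all_iff.2 fun n => ae_densePt m (hC n)
  have hpair : ∀ p q, p ≠ q → ∀ᵐ y ∂(Measure.pi ν), (∃ n, (y p, y q) ∈ C n) ∧
      ∀ n, (y p, y q) ∈ C n → DensePt m (C n) (y p, y q) := by
    intro p q hpq
    have hac : (ν p).prod (ν q) ≪ m.prod m :=
      Measure.AbsolutelyContinuous.prod cond_absolutelyContinuous cond_absolutelyContinuous
    have h : ∀ᵐ z ∂((Measure.pi ν).map (fun y => (y p, y q))), (∃ n, z ∈ C n) ∧
        ∀ n, z ∈ C n → DensePt m (C n) z := by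
      rw [map_pi_pair ν hpq]
      exact hac.ae_le (hae.and hD)
    exact ae_of_ae_map (by fun_prop) h
  have hpt : ∀ q, ∀ᵐ y ∂(Measure.pi ν), y q ∈ m.support ∧ y q ∈ closedBall (x (π q)) r := by
    intro q
    refine (measurePreserving_eval ν q).quasiMeasurePreserving.ae (p := fun t =>
      t ∈ m.support ∧ t ∈ closedBall (x (π q)) r) ?_
    refine Eventually.and ?_ ?_
    · exact cond_absolutelyContinuous.ae_le (Measure.support_mem_ae (μ := m))
    · exact ae_cond_mem measurableSet_closedBall
  have hgood : ∀ᵐ y ∂(Measure.pi ν), (∀ q, y q ∈ m.support ∧ y q ∈ closedBall (x (π q)) r) ∧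
      ∀ p q, p ≠ q → (∃ n, (y p, y q) ∈ C n) ∧
        ∀ n, (y p, y q) ∈ C n → DensePt m (C n) (y p, y q) := by
    refine (eventually_all.2 hpt).and (eventually_all.2 fun p => eventually_all.2 fun q => ?_)
    by_cases hpq : p = q
    · exact Eventually.of_forall fun y h => absurd hpq h
    · filter_upwards [hpair p q hpq] with y hy _ using hy
  -- The event that some pair over distinct indices misses its set.
  let bad : κ × κ → Set (κ → ℝ) := fun z =>
    {y | π z.1 ≠ π z.2 ∧ (y z.1, y z.2) ∉ C (k (π z.1) (π z.2))}
  have hbad : ∀ z, Measure.pi ν (bad z) ≤ δ := by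
    rintro ⟨p, q⟩
    by_cases hπ : π p = π q
    · simp [bad, hπ]
    have hpq : p ≠ q := fun h => hπ (h ▸ rfl)
    have hb : bad (p, q) = (fun y : κ → ℝ => (y p, y q)) ⁻¹' (C (k (π p) (π q)))ᶜ := by
      ext y; simp [bad, hπ]
    rw [hb, ← Measure.map_apply (by fun_prop) (hC _).compl, map_pi_pair ν hpq,
      cond_prod_cond m _ _ _ (hpos _ r hr0)]
    exact (hrδ _ _ hπ).le
  have hunion : Measure.pi ν (⋃ z, bad z) < 1 := by
    calc Measure.pi ν (⋃ z, bad z) ≤ ∑ z, Measure.pi ν (bad z) := measure_iUnion_fintype_le _ _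
      _ ≤ ∑ _z : κ × κ, δ := Finset.sum_le_sum fun z _ => hbad z
      _ = N * δ := by simp [hN]
      _ < 1 := hNδ
  obtain ⟨y, hyb, hy1, hy2⟩ : ∃ y, y ∉ (⋃ z, bad z) ∧
      (∀ q, y q ∈ m.support ∧ y q ∈ closedBall (x (π q)) r) ∧
      ∀ p q, p ≠ q → (∃ n, (y p, y q) ∈ C n) ∧
        ∀ n, (y p, y q) ∈ C n → DensePt m (C n) (y p, y q) := by
    by_contra! hcon
    have h1 : ∀ᵐ y ∂(Measure.pi ν), y ∈ ⋃ z, bad z := by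
      filter_upwards [hgood] with y hy
      by_contra hyb
      obtain ⟨p, q, hpq, h⟩ := hcon y hyb hy.1
      obtain ⟨n, hn, hn'⟩ := h (hy.2 p q hpq).1
      exact hn' ((hy.2 p q hpq).2 n hn)
    have h2 : Measure.pi ν (⋃ z, bad z) = 1 :=
      (measure_congr (eventuallyEq_univ.2 h1)).trans measure_univ
    exact hunion.ne h2
  have hk' : ∀ p q, ∃ n, (p ≠ q → DensePt m (C n) (y p, y q)) ∧
      (π p ≠ π q → n = k (π p) (π q)) := by
    intro p q
    by_cases hπ : π p = π q
    · by_cases hpq : p = q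
      · exact ⟨0, fun h => absurd hpq h, fun h => absurd hπ h⟩
      · obtain ⟨n, hn⟩ := (hy2 p q hpq).1
        exact ⟨n, fun _ => (hy2 p q hpq).2 n hn, fun h => absurd hπ h⟩
    · refine ⟨k (π p) (π q), fun hpq => (hy2 p q hpq).2 _ ?_, fun _ => rfl⟩
      by_contra hnot
      exact hyb (mem_iUnion.2 ⟨(p, q), hπ, hnot⟩)
  choose k' hk'1 hk'2 using hk'
  refine ⟨y, k', fun q => (hy1 q).1, hk'1, hk'2, fun q => ?_⟩
  rw [dist_comm]
  exact (mem_closedBall.1 (hy1 q).2).trans hrε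

/-- Level `n` of the Cantor scheme: a point for every binary word of length `n`, together with a
label telling which of the closed sets `C k` is promised to each pair of distinct words. -/
structure Level (m : Measure ℝ) (C : ℕ → Set (ℝ × ℝ)) (n : ℕ) where
  pt : (Fin n → Bool) → ℝ
  lab : (Fin n → Bool) → (Fin n → Bool) → ℕ
  supp : ∀ σ, pt σ ∈ m.support
  dens : ∀ σ τ, σ ≠ τ → DensePt m (C (lab σ τ)) (pt σ, pt τ)

/-- A null set for the square of a nonzero finite measure on `ℝ` avoids all pairs of distinct
points of some continuous image of the Cantor space inside the support of the measure. -/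
lemma exists_cantor_avoiding {m : Measure ℝ} [IsFiniteMeasure m] (hm : m ≠ 0) {E : Set (ℝ × ℝ)}
    (hE : m.prod m E = 0) :
    ∃ f : (ℕ → Bool) → ℝ, Continuous f ∧ (∀ s, f s ∈ m.support) ∧
      ∀ s t, s ≠ t → (f s, f t) ∉ E := by
  -- Closed sets avoiding `E` with conull union.
  have hcl : ∀ n : ℕ, ∃ F : Set (ℝ × ℝ), F ⊆ (toMeasurable (m.prod m) E)ᶜ ∧ IsClosed F ∧
      m.prod m ((toMeasurable (m.prod m) E)ᶜ \ F) < ((n : ENNReal) + 1)⁻¹ := fun n =>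
    (measurableSet_toMeasurable _ _).compl.exists_isClosed_sdiff_lt (measure_ne_top _ _)
      (ENNReal.inv_ne_zero.2 (ENNReal.add_ne_top.2 ⟨ENNReal.natCast_ne_top _, by simp⟩))
  choose C hCE hCc hCm using hcl
  have hCm' : ∀ n, MeasurableSet (C n) := fun n => (hCc n).measurableSet
  have hae : ∀ᵐ p ∂(m.prod m), ∃ n, p ∈ C n := by
    have h0 : m.prod m (toMeasurable (m.prod m) E) = 0 := by rw [measure_toMeasurable, hE]
    have h1 : m.prod m ((toMeasurable (m.prod m) E)ᶜ \ ⋃ n, C n) = 0 := by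
      by_contra hne
      obtain ⟨n, hn⟩ := ENNReal.exists_inv_nat_lt hne
      refine absurd ((measure_mono (sdiff_subset_sdiff_right (subset_iUnion C n))).trans_lt
        ((hCm n).trans_le ?_)) (lt_asymm hn)
      exact ENNReal.inv_le_inv.2 le_self_add
    have h2 : m.prod m (⋃ n, C n)ᶜ = 0 := by
      refine measure_mono_null (fun p hp => ?_) (measure_union_null h0 h1)
      by_cases h : p ∈ toMeasurable (m.prod m) E
      · exact Or.inl h
      · exact Or.inr ⟨h, hp⟩
    filter_upwards [compl_mem_ae_iff.2 h2] with p hp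
    simpa using hp
  have hrestr : ∀ n (L : Level m C n), ∃ L' : Level m C (n + 1),
      (∀ σ τ : Fin (n + 1) → Bool, Fin.init σ ≠ Fin.init τ →
        L'.lab σ τ = L.lab (Fin.init σ) (Fin.init τ)) ∧
      ∀ σ : Fin (n + 1) → Bool, dist (L.pt (Fin.init σ)) (L'.pt σ) ≤ 2 / 2 / 2 ^ n := by
    intro n L
    obtain ⟨y, k', h1, h2, h3, h4⟩ := splitting_step hCm' hae
      (fun σ : Fin (n + 1) → Bool => (Fin.init σ : Fin n → Bool)) L.pt L.lab L.supp L.dens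
      (ε := 2 / 2 / 2 ^ n) (by positivity)
    exact ⟨⟨y, k', h1, h2⟩, h3, h4⟩
  choose next hnext1 hnext2 using hrestr
  obtain ⟨x0, hx0⟩ : m.support.Nonempty := by
    have : NeZero m := ⟨hm⟩
    exact nonempty_of_mem (Measure.support_mem_ae (μ := m))
  let L0 : Level m C 0 := ⟨fun _ => x0, fun _ _ => 0, fun _ => hx0,
    fun σ τ h => absurd (Subsingleton.elim σ τ) h⟩
  let L : ∀ n, Level m C n := fun n => Nat.rec L0 (fun n l => next n l) n
  have hL : ∀ n, L (n + 1) = next n (L n) := fun n => rfl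
  let res : ∀ n, (ℕ → Bool) → (Fin n → Bool) := fun n s i => s i
  have hinit : ∀ n s, Fin.init (res (n + 1) s) = res n s := fun n s => by
    ext i; simp [res, Fin.init]
  let F : ℕ → (ℕ → Bool) → ℝ := fun n s => (L n).pt (res n s)
  have hdist : ∀ s n, dist (F n s) (F (n + 1) s) ≤ 2 / 2 / 2 ^ n := by
    intro s n
    have := hnext2 n (L n) (res (n + 1) s)
    rwa [hinit] at this
  have hlim : ∀ s, ∃ a, Tendsto (fun n => F n s) atTop (𝓝 a) := fun s =>
    cauchySeq_tendsto_of_complete (cauchySeq_of_le_geometric_two (hdist s))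
  choose f hf using hlim
  have hunif : TendstoUniformly F f atTop := by
    rw [Metric.tendstoUniformly_iff]
    intro ε hε
    have h0 : Tendsto (fun n : ℕ => (2 : ℝ) / 2 ^ n) atTop (𝓝 0) := by
      have := (tendsto_pow_atTop_nhds_zero_of_lt_one (r := (1 / 2 : ℝ)) (by norm_num)
        (by norm_num)).const_mul 2
      simpa [div_eq_mul_inv] using this
    filter_upwards [h0.eventually (gt_mem_nhds hε)] with n hn s
    rw [dist_comm]
    exact (dist_le_of_le_geometric_two_of_tendsto (hdist s) (hf s) n).trans_lt hn
  have hFc : ∀ n, Continuous (F n) := fun n =>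
    (continuous_of_discreteTopology (f := (L n).pt)).comp
      (continuous_pi fun i => continuous_apply (i : ℕ))
  refine ⟨f, hunif.continuous (Eventually.of_forall hFc).frequently, fun s => ?_, fun s t hst => ?_⟩
  · exact Measure.isClosed_support.mem_of_tendsto (hf s)
      (Eventually.of_forall fun n => (L n).supp _)
  · -- From the level where `s` and `t` split on, the label of the pair is constant.
    obtain ⟨j, hj⟩ := Function.ne_iff.1 hst
    have hne : ∀ n, j < n → res n s ≠ res n t := fun n hn h => hj (congrFun h ⟨j, hn⟩)
    have hlab : ∀ n, j + 1 ≤ n → (L n).lab (res n s) (res n t) =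
        (L (j + 1)).lab (res (j + 1) s) (res (j + 1) t) := by
      intro n hn
      induction n, hn using Nat.le_induction with
      | base => rfl
      | succ n hn ih =>
        rw [← ih, hL, hnext1 n (L n) _ _ (by rw [hinit, hinit]; exact hne n hn), hinit, hinit]
    have hmem : (f s, f t) ∈ C ((L (j + 1)).lab (res (j + 1) s) (res (j + 1) t)) := by
      refine (hCc _).mem_of_tendsto ((hf s).prodMk_nhds (hf t)) ?_
      filter_upwards [eventually_ge_atTop (j + 1)] with n hn
      rw [← hlab n hn]
      exact ((L n).dens _ _ (hne n hn)).1
    exact fun h => hCE _ hmem (subset_toMeasurable _ _ h)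

lemma perfect_range_cantor {f : (ℕ → Bool) → ℝ} (hf : Continuous f)
    (hinj : Function.Injective f) : Perfect (range f) := by
  refine ⟨(isCompact_range hf).isClosed, ?_⟩
  rintro _ ⟨s, rfl⟩
  rw [accPt_iff_frequently]
  -- `s` is the limit of the points obtained by flipping its `n`-th digit.
  have ht : Tendsto (fun n => Function.update s n (!s n)) atTop (𝓝 s) := by
    rw [tendsto_pi_nhds]
    intro i
    refine tendsto_const_nhds.congr' ?_
    filter_upwards [eventually_gt_atTop i] with n hn
    rw [Function.update_of_ne hn.ne]
  refine ((hf.tendsto s).comp ht).frequently (Frequently.of_forall fun n => ⟨fun h => ?_, ⟨_, rfl⟩⟩)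
  have := congrFun (hinj h) n
  simp at this

theorem psp_null_sigma12
    (hmeas : ∀ A : Set (ℝ × ℝ), Sigma12 A → NullMeasurableSet A (volume : Measure (ℝ × ℝ))) :
    ∀ B : Set ℝ, MeasurableSet B → 0 < volume B →
      ∀ E : Set (ℝ × ℝ), IsEquivOn B E → Sigma12 E →
        (∀ x ∈ B, volume {y | (x, y) ∈ E} = 0) →
        ∃ P : Set ℝ, P ⊆ B ∧ Perfect P ∧ P.Nonempty ∧
          ∀ x ∈ P, ∀ y ∈ P, x ≠ y → (x, y) ∉ E := by
  intro B hB hB0 E hEq hE hnull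
  have hEnull : (volume : Measure (ℝ × ℝ)) E = 0 := by
    obtain ⟨t, htE, htm, hte⟩ := (hmeas E hE).exists_measurable_subset_ae_eq
    rw [← measure_congr hte, Measure.volume_eq_prod]
    refine Measure.measure_prod_null_of_ae_null htm (Eventually.of_forall fun x => ?_)
    by_cases hx : x ∈ B
    · exact measure_mono_null (fun y hy => htE hy) (hnull x hx)
    · have : Prod.mk x ⁻¹' t = ∅ := by
        ext y
        simp only [mem_preimage, mem_empty_iff_false, iff_false]
        exact fun hy => hx (hEq.1 (htE hy)).1
      simp [this]
  obtain ⟨K, hKB, hK, hK0⟩ := hB.exists_lt_isCompact hB0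
  let m : Measure ℝ := volume.restrict K
  have hfin : IsFiniteMeasure m := ⟨by simpa [m] using hK.measure_lt_top⟩
  have hm : m ≠ 0 := fun h => hK0.ne' (by simpa [m] using h)
  have hmE : m.prod m E = 0 := by
    have hac : m.prod m ≪ (volume : Measure (ℝ × ℝ)) := by
      rw [Measure.volume_eq_prod]
      exact Measure.absolutelyContinuous_restrict.prod Measure.absolutelyContinuous_restrict
    exact hac hEnull
  have hmd : m.prod m (diagonal ℝ) = 0 := by
    refine Measure.measure_prod_null_of_ae_null measurableSet_diagonal
      (Eventually.of_forall fun x => ?_)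
    have : Prod.mk x ⁻¹' diagonal ℝ = {x} := by ext y; simp [eq_comm]
    simp [this]
  -- Avoiding the diagonal as well makes the map from the Cantor space injective.
  obtain ⟨f, hfc, hfs, hfE⟩ := exists_cantor_avoiding hm (measure_union_null hmE hmd)
  have hinj : Function.Injective f := fun s t h => by
    by_contra hst
    exact hfE s t hst (Or.inr h)
  have hsupp : m.support ⊆ K := by
    intro x hx
    by_contra hxK
    have := (Measure.mem_support_iff_forall _).1 hx _ (hK.isClosed.isOpen_compl.mem_nhds hxK)
    rw [Measure.restrict_apply hK.isClosed.measurableSet.compl] at this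
    simp at this
  refine ⟨range f, ?_, perfect_range_cantor hfc hinj, range_nonempty f, ?_⟩
  · rintro _ ⟨s, rfl⟩
    exact hKB (hsupp (hfs s))
  · rintro _ ⟨s, rfl⟩ _ ⟨t, rfl⟩ hst h
    exact hfE s t (fun e => hst (congrArg f e)) (Or.inl h)
end
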